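/- Let S be a D×D matrix with i.i.d. standard Gaussian entries, let r ∈ ℝ^D be a fixed nonzero vector, and define q = sign(S r) ∈ {−1, +1}^D (sign applied coordinatewise). Then for any fixed y ∈ ℝ^D, E[ √(π/2)·(‖r‖/D)·⟨q, S y⟩ ] = ⟨r, y⟩. -/

import Mathlib

open MeasureTheory ProbabilityTheory

/-- sign(t) = +1 if t ≥ 0, −1 otherwise. -/
noncomputable def qSign (t : ℝ) : ℝ := if 0 ≤ t then 1 else -1

lemma abs_gauss_aux (v : NNReal) (hv : v ≠ 0) :
    ∫ x, |x| ∂(gaussianReal 0 v) = 2 * ((Real.sqrt (2 * Real.pi * v))⁻¹ * v) := by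
  have hv0 : (0 : ℝ) < v := by positivity
  rw [integral_gaussianReal_eq_integral_smul hv]
  have h1 : (fun x : ℝ => gaussianPDFReal 0 v x • |x|) =
      fun x : ℝ => (fun t : ℝ => (Real.sqrt (2 * Real.pi * v))⁻¹ *
        (t * Real.exp (-(1 / (2 * v)) * t ^ 2))) |x| := by
    funext x
    simp only [gaussianPDFReal, smul_eq_mul, sq_abs, sub_zero]
    rw [show -x ^ 2 / (2 * (v : ℝ)) = -(1 / (2 * v)) * x ^ 2 by ring]
    ring
  rw [h1, integral_comp_abs (f := fun t : ℝ => (Real.sqrt (2 * Real.pi * v))⁻¹ *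
        (t * Real.exp (-(1 / (2 * v)) * t ^ 2))), integral_const_mul]
  congr 2
  have h2 := integral_rpow_mul_exp_neg_mul_rpow (p := 2) (q := 1) (b := 1 / (2 * v))
    (by norm_num) (by norm_num) (by positivity)
  have h3 : ((1 : ℝ) + 1) / 2 = 1 := by norm_num
  have h4 : -((1 : ℝ) + 1) / 2 = -1 := by norm_num
  simp only [Real.rpow_one, Real.rpow_two, h3, h4, Real.Gamma_one, Real.rpow_neg_one] at h2
  rw [h2]
  field_simp

lemma measurable_qSign : Measurable qSign :=
  Measurable.ite measurableSet_Ici measurable_const measurable_const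

lemma qSign_mul_self (t : ℝ) : qSign t * t = |t| := by
  unfold qSign
  split_ifs with h
  · rw [abs_of_nonneg h, one_mul]
  · rw [abs_of_neg (not_le.1 h)]; ring

lemma abs_qSign (t : ℝ) : ‖qSign t‖ ≤ 1 := by
  unfold qSign
  split_ifs <;> simp

lemma row_id (D : ℕ) : HasGaussianLaw (fun (s : Fin D → ℝ) => (fun i => s i))
    (Measure.pi fun _ : Fin D => gaussianReal 0 1) := by
  apply iIndepFun.hasGaussianLaw (X := fun i (s : Fin D → ℝ) => s i)
  · intro i
    have := (measurePreserving_eval (fun _ : Fin D => gaussianReal 0 1) i)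
    exact ⟨by
      rw [show (fun s : Fin D → ℝ => s i) = Function.eval i from rfl, this.map_eq]
      infer_instance⟩
  · exact iIndepFun_pi (X := fun _ => id) (fun _ => aemeasurable_id)

lemma row_pair (D : ℕ) (a b : Fin D → ℝ) :
    HasGaussianLaw (fun s : Fin D → ℝ => (∑ j, s j * a j, ∑ j, s j * b j))
    (Measure.pi fun _ : Fin D => gaussianReal 0 1) := by
  let L (a : Fin D → ℝ) : (Fin D → ℝ) →L[ℝ] ℝ :=
    ∑ j, (a j) • ContinuousLinearMap.proj (R := ℝ) (φ := fun _ : Fin D => ℝ) j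
  have h := (row_id D).map_fun ((L a).prod (L b))
  have hL : ∀ a s, L a s = ∑ j, s j * a j := by
    intro a s
    simp [L, mul_comm]
  simpa [hL] using h

lemma row_eval (D : ℕ) (j : Fin D) : HasGaussianLaw (fun s : Fin D → ℝ => s j)
    (Measure.pi fun _ : Fin D => gaussianReal 0 1) :=
  (row_id D).map_fun (ContinuousLinearMap.proj (R := ℝ) (φ := fun _ : Fin D => ℝ) j)

lemma row_mean (D : ℕ) (a : Fin D → ℝ) :
    ∫ s : Fin D → ℝ, ∑ j, s j * a j ∂(Measure.pi fun _ : Fin D => gaussianReal 0 1) = 0 := by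
  rw [integral_finsetSum _ (fun j _ => (row_eval D j).integrable.mul_const _)]
  apply Finset.sum_eq_zero
  intro j _
  rw [integral_mul_const, integral_comp_eval (μ := fun _ : Fin D => gaussianReal 0 1) (i := j)
    (f := fun x : ℝ => x) (by fun_prop)]
  simp

lemma row_cov (D : ℕ) (a b : Fin D → ℝ) :
    cov[fun s : Fin D → ℝ => ∑ j, s j * a j, fun s => ∑ j, s j * b j;
      Measure.pi fun _ : Fin D => gaussianReal 0 1] = ∑ j, a j * b j := by
  have hi : iIndepFun (fun i (s : Fin D → ℝ) => s i)
      (Measure.pi fun _ : Fin D => gaussianReal 0 1) :=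
    iIndepFun_pi (X := fun _ => id) (fun _ => aemeasurable_id)
  rw [covariance_fun_sum_fun_sum (X := fun j (s : Fin D → ℝ) => s j * a j)
    (Y := fun j (s : Fin D → ℝ) => s j * b j)
    (fun j => (row_eval D j).memLp_two.mul_const _)
    (fun j => (row_eval D j).memLp_two.mul_const _)]
  refine Finset.sum_congr rfl fun i _ => ?_
  rw [Finset.sum_eq_single i]
  · rw [covariance_mul_const_left, covariance_mul_const_right,
      covariance_self (row_eval D i).aemeasurable]
    have h := (measurePreserving_eval (fun _ : Fin D => gaussianReal 0 1) i)
    have h2 : Var[fun s : Fin D → ℝ => s i; Measure.pi fun _ : Fin D => gaussianReal 0 1] = 1 := by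
      have h3 := variance_map (X := fun x : ℝ => x) (Y := Function.eval i)
        (μ := Measure.pi fun _ : Fin D => gaussianReal 0 1) (by fun_prop) h.measurable.aemeasurable
      rw [h.map_eq] at h3
      rw [show (fun s : Fin D → ℝ => s i) = (fun x : ℝ => x) ∘ Function.eval i from rfl, ← h3]
      simp
    rw [h2]; ring
  · intro j _ hj
    rw [covariance_mul_const_left, covariance_mul_const_right,
      (hi.indepFun hj.symm).covariance_eq_zero (row_eval D i).memLp_two (row_eval D j).memLp_two]
    simp
  · simp

lemma row_main (D : ℕ) (r y : Fin D → ℝ) (hr : r ≠ 0) :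
    Integrable (fun s : Fin D → ℝ => qSign (∑ j, s j * r j) * (∑ j, s j * y j))
      (Measure.pi fun _ : Fin D => gaussianReal 0 1) ∧
    ∫ s : Fin D → ℝ, qSign (∑ j, s j * r j) * (∑ j, s j * y j)
      ∂(Measure.pi fun _ : Fin D => gaussianReal 0 1) =
      (∑ j, r j * y j) * (2 * (Real.sqrt (2 * Real.pi * ∑ j, r j ^ 2))⁻¹) := by
  have hn : 0 < ∑ j, r j ^ 2 := by
    obtain ⟨j, hj⟩ := Function.ne_iff.1 hr
    exact Finset.sum_pos' (fun _ _ => sq_nonneg _) ⟨j, Finset.mem_univ _, by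
      have : r j ≠ 0 := hj
      positivity⟩
  set n := ∑ j, r j ^ 2 with hn_def
  set c := (∑ j, r j * y j) / n with hc
  set μ := (Measure.pi fun _ : Fin D => gaussianReal 0 1) with hμ
  set z : Fin D → ℝ := fun j => y j - c * r j with hz
  have hq : AEStronglyMeasurable (fun s : Fin D → ℝ => qSign (∑ j, s j * r j)) μ :=
    (measurable_qSign.comp (by fun_prop)).aestronglyMeasurable
  have hint : ∀ b : Fin D → ℝ,
      Integrable (fun s : Fin D → ℝ => qSign (∑ j, s j * r j) * (∑ j, s j * b j)) μ := fun b =>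
    (row_pair D r b).snd.integrable.bdd_mul hq (Filter.Eventually.of_forall fun s => abs_qSign _)
  refine ⟨hint y, ?_⟩
  have hind : IndepFun (fun s : Fin D → ℝ => ∑ j, s j * r j) (fun s => ∑ j, s j * z j) μ := by
    apply (row_pair D r z).indepFun_of_covariance_eq_zero
    rw [row_cov]
    have : ∑ j, r j * z j = (∑ j, r j * y j) - c * n := by
      rw [hn_def, Finset.mul_sum, ← Finset.sum_sub_distrib]
      exact Finset.sum_congr rfl fun j _ => by simp only [hz]; ring
    rw [this, hc]
    field_simp
    ring
  have hzero : ∫ s : Fin D → ℝ, qSign (∑ j, s j * r j) * (∑ j, s j * z j) ∂μ = 0 := by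
    have := hind.integral_fun_comp_mul_comp (f := qSign) (g := fun x => x)
      (row_pair D r z).fst.aemeasurable (row_pair D r z).snd.aemeasurable measurable_qSign.aestronglyMeasurable (by fun_prop)
    rw [this, row_mean, mul_zero]
  have habs : ∫ s : Fin D → ℝ, |∑ j, s j * r j| ∂μ = 2 * ((Real.sqrt (2 * Real.pi * n))⁻¹ * n) := by
    have hm := (row_pair D r r).fst.map_eq_gaussianReal
    rw [row_mean, ← covariance_self (row_pair D r r).fst.aemeasurable, row_cov] at hm
    have e : ∑ j, r j * r j = n := Finset.sum_congr rfl fun j _ => by ring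
    rw [e] at hm
    have h5 := abs_gauss_aux n.toNNReal (by simpa using hn)
    rw [Real.coe_toNNReal _ hn.le] at h5
    rw [← h5, ← hm, integral_map (row_pair D r r).fst.aemeasurable (by fun_prop)]
  have hsplit : (fun s : Fin D → ℝ => qSign (∑ j, s j * r j) * (∑ j, s j * y j)) =
      fun s => c * |∑ j, s j * r j| + qSign (∑ j, s j * r j) * (∑ j, s j * z j) := by
    funext s
    have : ∑ j, s j * z j = (∑ j, s j * y j) - c * ∑ j, s j * r j := by
      rw [Finset.mul_sum, ← Finset.sum_sub_distrib]
      exact Finset.sum_congr rfl fun j _ => by simp only [hz]; ring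
    rw [this, ← qSign_mul_self]
    ring
  rw [hsplit, integral_add _ (hint z), hzero, integral_const_mul, habs, hc]
  · field_simp
    ring
  · exact ((row_pair D r r).fst.integrable.abs).const_mul _

/-- Unbiasedness of the QJL residual estimator: with S a D×D i.i.d. standard
Gaussian matrix and q = sign(S r), E[√(π/2)·(‖r‖/D)·⟨q, S y⟩] = ⟨r, y⟩. -/
theorem stmt_8 (D : ℕ) (r y : Fin D → ℝ) (hr : r ≠ 0) :
    (∫ S : Fin D → Fin D → ℝ,
        Real.sqrt (Real.pi / 2) * (Real.sqrt (∑ j, r j ^ 2) / D) *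
          ∑ i, qSign (∑ j, S i j * r j) * (∑ j, S i j * y j)
        ∂(Measure.pi fun _ : Fin D => Measure.pi fun _ : Fin D => gaussianReal 0 1)) =
      ∑ j, r j * y j := by
  obtain ⟨hI, hE⟩ := row_main D r y hr
  obtain ⟨j, hj⟩ := Function.ne_iff.1 hr
  have hn : 0 < ∑ j, r j ^ 2 :=
    Finset.sum_pos' (fun _ _ => sq_nonneg _) ⟨j, Finset.mem_univ _, by
      have : r j ≠ 0 := hj
      positivity⟩
  have hD : (D : ℝ) ≠ 0 := by
    have := j.pos
    positivity
  rw [integral_const_mul, integral_finsetSum _ (fun i _ => integrable_comp_eval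
    (μ := fun _ : Fin D => Measure.pi fun _ : Fin D => gaussianReal 0 1) (i := i) hI)]
  have h : ∀ i : Fin D, ∫ S : Fin D → Fin D → ℝ,
      qSign (∑ j, S i j * r j) * (∑ j, S i j * y j)
      ∂(Measure.pi fun _ : Fin D => Measure.pi fun _ : Fin D => gaussianReal 0 1) =
      (∑ j, r j * y j) * (2 * (Real.sqrt (2 * Real.pi * ∑ j, r j ^ 2))⁻¹) := fun i => by
    rw [← hE]
    exact integral_comp_eval
      (μ := fun _ : Fin D => Measure.pi fun _ : Fin D => gaussianReal 0 1) (i := i)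
      hI.aestronglyMeasurable
  simp only [h, Finset.sum_const, Finset.card_univ, Fintype.card_fin, nsmul_eq_mul]
  generalize (∑ j, r j ^ 2) = n at *
  have e : Real.sqrt (2 * Real.pi * n) = 2 * (Real.sqrt (Real.pi / 2) * Real.sqrt n) := by
    rw [← Real.sqrt_mul (by positivity),
      show 2 * Real.pi * n = 2 ^ 2 * (Real.pi / 2 * n) by ring,
      Real.sqrt_mul (by positivity), Real.sqrt_sq (by norm_num)]
  have h1 : Real.sqrt (Real.pi / 2) ≠ 0 := by positivity
  have h2 : Real.sqrt n ≠ 0 := by positivity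
  rw [e]
  field_simp
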